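/- arXiv:1908.01223 — 3 statements merged into one kernel-verified Lean document; each statement's English description precedes it below -/
import Mathlib

section
/- Let G be a P4-sparse graph with at least 2 vertices. Then exactly one of the following holds: (1) G is not connected; (2) the complement of G is not connected; (3) G is a spider. -/
open SimpleGraph

variable {V : Type*}

/-- `a, b, c, d` form an induced path on four vertices (a `P4`) in `G`. -/
def IsP4 (G : SimpleGraph V) (a b c d : V) : Prop :=
  a ≠ b ∧ a ≠ c ∧ a ≠ d ∧ b ≠ c ∧ b ≠ d ∧ c ≠ d ∧
    G.Adj a b ∧ G.Adj b c ∧ G.Adj c d ∧ ¬G.Adj a c ∧ ¬G.Adj a d ∧ ¬G.Adj b d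

/-- A graph is a cograph if it contains no induced `P4`. -/
def IsCograph (G : SimpleGraph V) : Prop :=
  ∀ a b c d : V, ¬IsP4 G a b c d

/-- The vertex set `A` induces a `P4` in `G`. -/
def InducesP4 (G : SimpleGraph V) (A : Set V) : Prop :=
  ∃ a b c d : V, IsP4 G a b c d ∧ A = {a, b, c, d}

/-- `G` is `P4`-sparse: every set of five vertices induces at most one `P4`. -/
def P4Sparse (G : SimpleGraph V) : Prop :=
  ∀ s : Set V, s.ncard = 5 →
    ∀ A B : Set V, A ⊆ s → B ⊆ s → InducesP4 G A → InducesP4 G B → A = B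

/-- `F` is a deletion set of `G`: a set of edges of `G` whose removal yields a cograph. -/
def IsDeletionSet (G : SimpleGraph V) (F : Set (Sym2 V)) : Prop :=
  F ⊆ G.edgeSet ∧ IsCograph (G.deleteEdges F)

/-- The minimum size of a deletion set of `G`. -/
noncomputable def cographAlpha (G : SimpleGraph V) : ℕ :=
  sInf {n | ∃ F : Set (Sym2 V), IsDeletionSet G F ∧ F.ncard = n}


/-- `S, K, R` is a spider partition of the vertices of `G`. -/
def IsSpiderPartition (G : SimpleGraph V) (S K R : Set V) : Prop :=
  S ∪ K ∪ R = Set.univ ∧ Disjoint S K ∧ Disjoint S R ∧ Disjoint K R ∧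
  S.ncard = K.ncard ∧ 2 ≤ K.ncard ∧
  (∀ u ∈ S, ∀ v ∈ S, u ≠ v → ¬G.Adj u v) ∧
  (∀ u ∈ K, ∀ v ∈ K, u ≠ v → G.Adj u v) ∧
  (∀ r ∈ R, ∀ k ∈ K, G.Adj r k) ∧
  (∀ r ∈ R, ∀ s ∈ S, ¬G.Adj r s) ∧
  ∃ φ : S ≃ K,
    (∀ s : S, G.neighborSet s ∩ K = {(φ s : V)}) ∨
    (∀ s : S, G.neighborSet s ∩ K = K \ {(φ s : V)})

/-- `G` is a spider. -/
def IsSpider (G : SimpleGraph V) : Prop :=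
  ∃ S K R : Set V, IsSpiderPartition G S K R

/-!
Complementation preserves `P4`-sparseness and spiders, and spiders are connected; what has to be
shown is that a connected and co-connected `P4`-sparse graph `G` is a spider. Take a maximal
vertex set `H` inducing a spider. A vertex outside `H` is adjacent to all legs, to no leg
vertex, or to the body only. In the last case it extends the head; in the others it extends the
legs, unless it is adjacent to all of `H` or to none of it. So maximality makes `H` homogeneous,
and `P4`-sparseness then keeps every `P4` from meeting `H` in exactly one vertex. If `H` is not
everything, (co-)connectivity yields a `P4` outside `H` whose inner vertices are adjacent to all
of `H` and whose ends to none of it, and adding `H` to it as a head gives a larger spider. The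
same argument with a single vertex for `H` provides the first `P4`.
-/

/-! ### Induced paths and `P4`-sparse graphs -/

lemma adj_iff_of_compl_adj_iff {G : SimpleGraph V} {x a b : V} (ha : x ≠ a) (hb : x ≠ b)
    (h : Gᶜ.Adj x a ↔ Gᶜ.Adj x b) : G.Adj x a ↔ G.Adj x b := by
  simpa only [compl_adj, ha, hb, ne_eq, not_false_eq_true, true_and, not_iff_not] using h

section InducedP4

variable {G : SimpleGraph V} {a b c d : V} {A : Set V}

lemma IsP4.of_adj (hab : G.Adj a b) (hbc : G.Adj b c) (hcd : G.Adj c d)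
    (hac : ¬G.Adj a c) (had : ¬G.Adj a d) (hbd : ¬G.Adj b d) : IsP4 G a b c d :=
  ⟨hab.ne, fun h => had (h ▸ hcd), fun h => hac (h ▸ hcd.symm), hbc.ne,
    fun h => had (h ▸ hab), hcd.ne, hab, hbc, hcd, hac, had, hbd⟩

lemma IsP4.symm (h : IsP4 G a b c d) : IsP4 G d c b a := by
  obtain ⟨-, -, -, -, -, -, hab, hbc, hcd, hac, had, hbd⟩ := h
  exact .of_adj hcd.symm hbc.symm hab.symm (mt .symm hbd) (mt .symm had) (mt .symm hac)

lemma IsP4.compl (h : IsP4 G a b c d) : IsP4 Gᶜ b d a c := by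
  obtain ⟨-, hac, had, -, hbd, -, hab, hbc, hcd, hac', had', hbd'⟩ := h
  exact .of_adj ⟨hbd, hbd'⟩ ⟨had.symm, mt .symm had'⟩ ⟨hac, hac'⟩
    (fun h => h.2 hab.symm) (fun h => h.2 hbc) (fun h => h.2 hcd.symm)

lemma InducesP4.compl (h : InducesP4 G A) : InducesP4 Gᶜ A := by
  obtain ⟨a, b, c, d, hP, rfl⟩ := h
  exact ⟨b, d, a, c, hP.compl, by grind⟩

lemma inducesP4_compl : InducesP4 Gᶜ A ↔ InducesP4 G A :=
  ⟨fun h => compl_compl G ▸ h.compl, .compl⟩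

lemma InducesP4.ncard_eq (h : InducesP4 G A) : A.ncard = 4 := by
  classical
  obtain ⟨a, b, c, d, ⟨hab, hac, had, hbc, hbd, hcd, -⟩, rfl⟩ := h
  simp_rw [← Finset.coe_singleton, ← Finset.coe_insert, Set.ncard_coe_finset]
  simp [*]

end InducedP4

namespace P4Sparse

variable {G : SimpleGraph V} {a b c d x : V}

lemma compl (hG : P4Sparse G) : P4Sparse Gᶜ := fun s hs A B hA hB hPA hPB =>
  hG s hs A B hA hB (inducesP4_compl.1 hPA) (inducesP4_compl.1 hPB)

lemma notMem_of_subset_insert (hG : P4Sparse G) {A B : Set V} (hA : InducesP4 G A)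
    (hB : InducesP4 G B) (hx : x ∉ A) (hBA : B ⊆ insert x A) : x ∉ B := by
  have hfin : A.Finite := Set.finite_of_ncard_pos (by simp [hA.ncard_eq])
  have hcard : (insert x A).ncard = 5 := by
    rw [Set.ncard_insert_of_notMem hx hfin, hA.ncard_eq]
  rwa [hG _ hcard B A hBA (Set.subset_insert x A) hB hA]

lemma not_isP4_of_notMem (hG : P4Sparse G) (hP : IsP4 G a b c d)
    (hx : x ∉ ({a, b, c, d} : Set V)) {p q r t : V}
    (hsub : ({p, q, r, t} : Set V) ⊆ {x, a, b, c, d}) (hmem : x ∈ ({p, q, r, t} : Set V)) :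
    ¬IsP4 G p q r t := fun hQ =>
  hG.notMem_of_subset_insert ⟨a, b, c, d, hP, rfl⟩ ⟨p, q, r, t, hQ, rfl⟩ hx hsub hmem

lemma adj_inner_iff (hG : P4Sparse G) (hP : IsP4 G a b c d) (hx : x ∉ ({a, b, c, d} : Set V)) :
    G.Adj x b ↔ G.Adj x c := by
  suffices key : ∀ {a b c d : V}, IsP4 G a b c d → x ∉ ({a, b, c, d} : Set V) →
      G.Adj x b → G.Adj x c from
    ⟨key hP hx, key hP.symm (by grind)⟩
  intro a b c d hP hx hxb
  by_contra hxc
  have hno : ∀ {p q r t : V}, ({p, q, r, t} : Set V) ⊆ {x, a, b, c, d} →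
      x ∈ ({p, q, r, t} : Set V) → ¬IsP4 G p q r t := hG.not_isP4_of_notMem hP hx
  obtain ⟨-, -, -, -, -, -, hab, hbc, hcd, hac, had, hbd⟩ := hP
  by_cases hxd : G.Adj x d
  · by_cases hxa : G.Adj x a
    · have hQ : IsP4 G a x d c := .of_adj hxa.symm hxd hcd.symm had hac hxc
      exact hno (by grind) (by simp) hQ
    · have hQ : IsP4 G a b x d := .of_adj hab hxb.symm hxd (mt .symm hxa) had hbd
      exact hno (by grind) (by simp) hQ
  · have hQ : IsP4 G x b c d := .of_adj hxb hbc hcd hxc hxd hbd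
    exact hno (by grind) (by simp) hQ

-- Complementation exchanges the ends of a `P4` with its inner vertices.
lemma adj_end_iff (hG : P4Sparse G) (hP : IsP4 G a b c d) (hx : x ∉ ({a, b, c, d} : Set V)) :
    G.Adj x a ↔ G.Adj x d :=
  adj_iff_of_compl_adj_iff (by grind) (by grind)
    (hG.compl.adj_inner_iff hP.compl (by grind)).symm

lemma adj_inner_of_adj_end (hG : P4Sparse G) (hP : IsP4 G a b c d)
    (hx : x ∉ ({a, b, c, d} : Set V)) (hxa : G.Adj x a) : G.Adj x b := by
  by_contra hxb
  have hxd : G.Adj x d := (hG.adj_end_iff hP hx).1 hxa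
  have hQ : IsP4 G b a x d := by
    obtain ⟨-, -, -, -, -, -, hab, -, -, -, had, hbd⟩ := hP
    exact .of_adj hab.symm hxa.symm hxd (mt .symm hxb) hbd had
  exact hG.not_isP4_of_notMem hP hx (by grind) (by simp) hQ

end P4Sparse

/-! ### Homogeneous sets -/

section Homogeneous

variable {G : SimpleGraph V} {H : Set V} {x h h' : V}

/-- The set of vertices adjacent to every vertex of `H`. No vertex of `H` is among them, and
`completeTo Gᶜ H` consists of the vertices outside `H` with no neighbour in `H`. -/
def completeTo (G : SimpleGraph V) (H : Set V) : Set V :=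
  {x | ∀ h ∈ H, G.Adj x h}

/-- `H` is a homogeneous set (a module) of `G`: no vertex outside `H` distinguishes two vertices
of `H`. -/
def IsHomogeneous (G : SimpleGraph V) (H : Set V) : Prop :=
  ∀ x ∉ H, x ∈ completeTo G H ∨ x ∈ completeTo Gᶜ H

/-- No induced `P4` of `G` has exactly one vertex in `H`. For homogeneous sets `H` this holds both
in cographs and, when `H` has several vertices, in `P4`-sparse graphs. -/
def NoP4MeetsOnce (G : SimpleGraph V) (H : Set V) : Prop :=
  ∀ A h, InducesP4 G A → A ∩ H ≠ {h}

lemma notMem_of_mem_completeTo (hx : x ∈ completeTo G H) : x ∉ H :=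
  fun hxH => (hx x hxH).ne rfl

lemma IsHomogeneous.compl (hH : IsHomogeneous G H) : IsHomogeneous Gᶜ H := fun x hx => by
  rw [compl_compl]
  exact (hH x hx).symm

lemma IsHomogeneous.adj_iff (hH : IsHomogeneous G H) (hx : x ∉ H) (hh : h ∈ H) (hh' : h' ∈ H) :
    G.Adj x h ↔ G.Adj x h' := by
  rcases hH x hx with hT | hN
  · exact iff_of_true (hT h hh) (hT h' hh')
  · exact iff_of_false (hN h hh).2 (hN h' hh').2

lemma isHomogeneous_singleton (G : SimpleGraph V) (h : V) : IsHomogeneous G {h} := fun x hx =>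
  (em (G.Adj x h)).imp (by rintro hxh _ rfl; exact hxh) (by rintro hxh _ rfl; exact ⟨hx, hxh⟩)

lemma NoP4MeetsOnce.compl (hP : NoP4MeetsOnce G H) : NoP4MeetsOnce Gᶜ H :=
  fun A h hA => hP A h (inducesP4_compl.1 hA)

lemma IsCograph.noP4MeetsOnce (hG : IsCograph G) (H : Set V) : NoP4MeetsOnce G H :=
  fun _ _ ⟨a, b, c, d, hP, _⟩ => (hG a b c d hP).elim

lemma IsHomogeneous.noP4MeetsOnce (hH : IsHomogeneous G H) (hG : P4Sparse G)
    (hnt : H.Nontrivial) : NoP4MeetsOnce G H := by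
  rintro _ y ⟨a, b, c, d, hP, rfl⟩ hy
  have hyA : y ∈ ({a, b, c, d} : Set V) ∩ H := hy ▸ rfl
  have hout : ∀ z ∈ ({a, b, c, d} : Set V), z ≠ y → z ∉ H := fun z hz hzy hzH =>
    hzy (Set.mem_singleton_iff.1 (hy ▸ ⟨hz, hzH⟩))
  obtain ⟨y', hy', hne⟩ := hnt.exists_ne y
  have hy'A : y' ∉ ({a, b, c, d} : Set V) := fun hmem => hout y' hmem hne hy'
  -- The twin `y'` of `y` sees the rest of the path as `y` does.
  have htwin : ∀ z ∈ ({a, b, c, d} : Set V), z ≠ y → (G.Adj y' z ↔ G.Adj y z) :=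
    fun z hz hzy => by
      rw [G.adj_comm y', G.adj_comm y, hH.adj_iff (hout z hz hzy) hy' hyA.2]
  have hinner := hG.adj_inner_iff hP hy'A
  have hend := hG.adj_end_iff hP hy'A
  obtain ⟨hab, hac, had, hbc, hbd, hcd, hab', hbc', hcd', hac', had', hbd'⟩ := hP
  rcases hyA.1 with rfl | rfl | rfl | rfl
  · rw [htwin b (by simp) hab.symm, htwin c (by simp) hac.symm] at hinner
    exact hac' (hinner.1 hab')
  · rw [htwin a (by simp) hab, htwin d (by simp) hbd.symm] at hend
    exact hbd' (hend.1 hab'.symm)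
  · rw [htwin a (by simp) hac, htwin d (by simp) hcd.symm] at hend
    exact hac' (hend.2 hcd').symm
  · rw [htwin b (by simp) hbd, htwin c (by simp) hcd] at hinner
    exact hbd' (hinner.2 hcd'.symm).symm

lemma exists_adj_mem_notMem_of_connected (hc : G.Connected) {A : Set V} {u v : V} (hu : u ∈ A)
    (hv : v ∉ A) : ∃ y ∈ A, ∃ z ∉ A, G.Adj y z := by
  obtain ⟨p⟩ := hc.preconnected u v
  obtain ⟨e, -, he, he'⟩ := p.exists_boundary_dart A hu hv
  exact ⟨e.fst, he, e.snd, he', e.adj⟩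

namespace NoP4MeetsOnce

lemma not_isP4 (hP : NoP4MeetsOnce G H) {a b c : V} (hh : h ∈ H) (ha : a ∉ H) (hb : b ∉ H)
    (hc : c ∉ H) : ¬IsP4 G h a b c := fun hQ =>
  hP {h, a, b, c} h ⟨h, a, b, c, hQ, rfl⟩ (by grind)

lemma adj_completeTo_of_adj (hP : NoP4MeetsOnce G H) (hne : H.Nonempty) {n n' t : V}
    (hn : n ∈ completeTo Gᶜ H) (hn' : n' ∈ completeTo Gᶜ H) (ht : t ∈ completeTo G H)
    (hnn' : G.Adj n n') (hnt : G.Adj n t) : G.Adj n' t := by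
  by_contra hn't
  obtain ⟨h, hh⟩ := hne
  have hQ : IsP4 G h t n n' := .of_adj (ht h hh).symm hnt.symm hnn'
    (mt .symm (hn h hh).2) (mt .symm (hn' h hh).2) (mt .symm hn't)
  exact hP.not_isP4 hh (notMem_of_mem_completeTo ht) (notMem_of_mem_completeTo hn)
    (notMem_of_mem_completeTo hn') hQ

lemma exists_adj_completeTo (hP : NoP4MeetsOnce G H) (hH : IsHomogeneous G H) (hne : H.Nonempty)
    (hc : G.Connected) {n : V} (hn : n ∈ completeTo Gᶜ H) : ∃ t ∈ completeTo G H, G.Adj n t := by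
  by_contra! hcon
  let C : Set V := {y | y ∈ completeTo Gᶜ H ∧ ∀ t ∈ completeTo G H, ¬G.Adj y t}
  obtain ⟨h, hh⟩ := hne
  have hhC : h ∉ C := fun hC => notMem_of_mem_completeTo hC.1 hh
  obtain ⟨y, ⟨hyN, hy⟩, z, hzC, hyz⟩ :=
    exists_adj_mem_notMem_of_connected hc (A := C) ⟨hn, hcon⟩ hhC
  rcases hH z (fun hzH => (hyN z hzH).2 hyz) with hzT | hzN
  · exact hy z hzT hyz
  · exact hzC ⟨hzN, fun t ht hzt =>
      hy t ht (hP.adj_completeTo_of_adj ⟨h, hh⟩ hzN hyN ht hyz.symm hzt)⟩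

-- Choose `b` with a maximal neighbourhood outside: `d` witnesses that `b` misses something, `c`
-- is a neighbour of `d`, and by maximality `b` sees some `a` that `c` does not.
lemma exists_isP4 [Finite V] (hP : NoP4MeetsOnce G H) (hH : IsHomogeneous G H)
    (hne : H.Nonempty) (huniv : H ≠ Set.univ) (hc : G.Connected) (hcc : Gᶜ.Connected) :
    ∃ a ∈ completeTo Gᶜ H, ∃ b ∈ completeTo G H, ∃ c ∈ completeTo G H, ∃ d ∈ completeTo Gᶜ H,
      IsP4 G a b c d := by
  obtain ⟨x, hx⟩ := (Set.ne_univ_iff_exists_notMem H).1 huniv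
  have hTne : (completeTo G H).Nonempty := (hH x hx).elim (fun hT => ⟨x, hT⟩) fun hN =>
    (hP.exists_adj_completeTo hH hne hc hN).imp fun _ ht => ht.1
  obtain ⟨b, hb, hmax⟩ := (completeTo G H).toFinite.exists_maximalFor
    (fun t => {n | n ∈ completeTo Gᶜ H ∧ G.Adj n t}) _ hTne
  obtain ⟨d, hd, hbd⟩ : ∃ d ∈ completeTo Gᶜ H, Gᶜ.Adj b d :=
    hP.compl.exists_adj_completeTo hH.compl hne hcc (by rwa [compl_compl])
  obtain ⟨c, hc', hdc⟩ := hP.exists_adj_completeTo hH hne hc hd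
  obtain ⟨a, ha, hab, hac⟩ : ∃ a ∈ completeTo Gᶜ H, G.Adj a b ∧ ¬G.Adj a c := by
    by_contra! hsub
    exact hbd.2 (hmax hc' (fun n hn => ⟨hn.1, hsub n hn.1 hn.2⟩) ⟨hd, hdc⟩).2.symm
  have had : ¬G.Adj a d := fun had => hbd.2 (hP.adj_completeTo_of_adj hne ha hd hb had hab).symm
  have hbc : G.Adj b c := by
    by_contra hbc
    have hbc' : Gᶜ.Adj b c := ⟨fun h => hac (h ▸ hab), hbc⟩
    have hcd : Gᶜ.Adj c d := hP.compl.adj_completeTo_of_adj hne (by rwa [compl_compl])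
      (by rwa [compl_compl]) hd hbc' hbd
    exact hcd.2 hdc.symm
  exact ⟨a, ha, b, hb, c, hc', d, hd, .of_adj hab hbc hdc.symm hac had hbd.2⟩

end NoP4MeetsOnce

lemma IsCograph.not_connected_compl [Finite V] [Nontrivial V] (hG : IsCograph G)
    (hc : G.Connected) : ¬Gᶜ.Connected := fun hcc => by
  obtain ⟨h⟩ := hc.nonempty
  have huniv : ({h} : Set V) ≠ Set.univ := Set.singleton_ne_univ h
  obtain ⟨a, -, b, -, c, -, d, -, hP⟩ := (hG.noP4MeetsOnce {h}).exists_isP4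
    (isHomogeneous_singleton G h) (Set.singleton_nonempty h) huniv hc hcc
  exact hG a b c d hP

end Homogeneous

/-! ### Spiders -/

section LegMatching

variable {ι : Type*} {G : SimpleGraph V} {s k : ι → V}

/-- `s i` is adjacent to `k i` and to no other `k j`. The legs of a thin spider form such a matching
in `G`, those of a thick spider one in `Gᶜ`. -/
def IsLegMatching (G : SimpleGraph V) (s k : ι → V) : Prop :=
  (∀ i, G.Adj (s i) (k i)) ∧ ∀ i j, i ≠ j → Gᶜ.Adj (s i) (k j)

namespace IsLegMatching

lemma symm (h : IsLegMatching G s k) : IsLegMatching G k s :=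
  ⟨fun i => (h.1 i).symm, fun i j hij => (h.2 j i hij.symm).symm⟩

lemma ne (h : IsLegMatching G s k) (i j : ι) : s i ≠ k j := by
  rcases eq_or_ne i j with rfl | hij
  · exact (h.1 i).ne
  · exact (h.2 i j hij).ne

lemma neighborSet_inter (h : IsLegMatching G s k) (i : ι) :
    G.neighborSet (s i) ∩ Set.range k = {k i} := by
  ext x
  simp only [Set.mem_inter_iff, mem_neighborSet, Set.mem_range, Set.mem_singleton_iff]
  constructor
  · rintro ⟨hadj, j, rfl⟩
    by_contra hne
    exact (h.2 i j fun hij => hne (hij ▸ rfl)).2 hadj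
  · rintro rfl
    exact ⟨h.1 i, i, rfl⟩

lemma neighborSet_inter_of_compl (h : IsLegMatching Gᶜ s k) (i : ι) :
    G.neighborSet (s i) ∩ Set.range k = Set.range k \ {k i} := by
  rw [← h.neighborSet_inter i]
  ext x
  simp only [Set.mem_inter_iff, mem_neighborSet, Set.mem_sdiff, compl_adj]
  constructor
  · exact fun ⟨hadj, hx⟩ => ⟨hx, fun hcompl => hcompl.1.2 hadj⟩
  · rintro ⟨⟨j, rfl⟩, hx⟩
    exact ⟨not_not.1 fun hadj => hx ⟨⟨h.ne i j, hadj⟩, j, rfl⟩, j, rfl⟩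

lemma comp_swap [DecidableEq ι] (h : IsLegMatching G s k) {i j : ι} (hij : i ≠ j)
    (hall : ∀ l, l = i ∨ l = j) : IsLegMatching Gᶜ s (k ∘ Equiv.swap i j) := by
  refine ⟨fun l => ?_, fun l m hlm => ?_⟩
  · rcases hall l with rfl | rfl
    · simpa only [Function.comp_apply, Equiv.swap_apply_left] using h.2 _ _ hij
    · simpa only [Function.comp_apply, Equiv.swap_apply_right] using h.2 _ _ hij.symm
  · have hswap : Equiv.swap i j m = l := by
      rcases hall l with rfl | rfl <;> rcases hall m with rfl | rfl <;> simp_all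
    rw [compl_compl, Function.comp_apply, hswap]
    exact h.1 l

lemma option_elim (h : IsLegMatching G s k) {m x : V} (hmx : G.Adj m x)
    (hm : ∀ i, Gᶜ.Adj m (k i)) (hx : ∀ i, Gᶜ.Adj x (s i)) :
    IsLegMatching G (fun o : Option ι => o.elim m s) (fun o => o.elim x k) := by
  constructor
  · rintro (_ | i)
    exacts [hmx, h.1 i]
  · rintro (_ | i) (_ | j) hij
    exacts [absurd rfl hij, hm j, (hx i).symm, h.2 i j fun e => hij (e ▸ rfl)]

end IsLegMatching

end LegMatching

lemma pairwise_adj_option_elim {ι : Type*} {G : SimpleGraph V} {f : ι → V} {v : V}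
    (hf : ∀ i j, i ≠ j → G.Adj (f i) (f j)) (hv : ∀ i, G.Adj v (f i)) (o o' : Option ι)
    (hne : o ≠ o') : G.Adj (o.elim v f) (o'.elim v f) := by
  rcases o with _ | i <;> rcases o' with _ | j
  exacts [absurd rfl hne, hv j, (hv i).symm, hf i j fun e => hne (e ▸ rfl)]

/-- The vertices `s i` (feet), `k i` (body) and the set `R` (head) induce a spider in `G`. Stating
non-adjacency as adjacency in `Gᶜ` makes the notion self-complementary and all the vertices
distinct. -/
structure IsIndexedSpider {ι : Type*} (G : SimpleGraph V) (s k : ι → V) (R : Set V) : Prop where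
  feet : ∀ i j, i ≠ j → Gᶜ.Adj (s i) (s j)
  body : ∀ i j, i ≠ j → G.Adj (k i) (k j)
  head_feet : ∀ r ∈ R, ∀ i, Gᶜ.Adj r (s i)
  head_body : ∀ r ∈ R, ∀ i, G.Adj r (k i)
  legs : IsLegMatching G s k ∨ IsLegMatching Gᶜ s k

namespace IsIndexedSpider

variable {ι : Type*} {G : SimpleGraph V} {s k : ι → V} {R : Set V}

lemma compl (h : IsIndexedSpider G s k R) : IsIndexedSpider Gᶜ k s R where
  feet := by simpa only [compl_compl] using h.body
  body := h.feet
  head_feet := by simpa only [compl_compl] using h.head_body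
  head_body := h.head_feet
  legs := by
    rw [compl_compl]
    exact h.legs.symm.imp .symm .symm

lemma injective_body (h : IsIndexedSpider G s k R) : Function.Injective k := fun i j hij => by
  by_contra hne
  exact (h.body i j hne).ne hij

lemma injective_feet (h : IsIndexedSpider G s k R) : Function.Injective s :=
  h.compl.injective_body

lemma feet_ne_body (h : IsIndexedSpider G s k R) (i j : ι) : s i ≠ k j :=
  h.legs.elim (·.ne i j) (·.ne i j)

lemma disjoint_body_head (h : IsIndexedSpider G s k R) : Disjoint (Set.range k) R := by
  rw [Set.disjoint_right]
  rintro r hr ⟨i, rfl⟩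
  exact (h.head_body _ hr i).ne rfl

lemma isSpiderPartition [Finite ι] [Nontrivial ι] (h : IsIndexedSpider G s k R)
    (huniv : Set.range s ∪ Set.range k ∪ R = Set.univ) :
    IsSpiderPartition G (Set.range s) (Set.range k) R := by
  have hcard : (Set.range k).ncard = Nat.card ι := Set.ncard_range_of_injective h.injective_body
  have hdisj : Disjoint (Set.range s) (Set.range k) :=
    Set.disjoint_range_iff.2 h.feet_ne_body
  let φ : Set.range s ≃ Set.range k :=
    (Equiv.ofInjective s h.injective_feet).symm.trans (Equiv.ofInjective k h.injective_body)
  have hφ : ∀ i, (φ ⟨s i, i, rfl⟩ : V) = k i := fun i => by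
    simp [φ, Equiv.ofInjective_symm_apply]
  refine ⟨huniv, hdisj, h.compl.disjoint_body_head, h.disjoint_body_head,
    hcard ▸ Set.ncard_range_of_injective h.injective_feet, hcard ▸ Finite.one_lt_card,
    ?_, ?_, ?_, ?_, φ, ?_⟩
  · rintro _ ⟨i, rfl⟩ _ ⟨j, rfl⟩ hne
    exact (h.feet i j fun hij => hne (hij ▸ rfl)).2
  · rintro _ ⟨i, rfl⟩ _ ⟨j, rfl⟩ hne
    exact h.body i j fun hij => hne (hij ▸ rfl)
  · rintro r hr _ ⟨i, rfl⟩
    exact h.head_body r hr i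
  · rintro r hr _ ⟨i, rfl⟩
    exact (h.head_feet r hr i).2
  · refine h.legs.imp ?_ ?_
    · rintro hthin ⟨_, i, rfl⟩
      rw [hφ, hthin.neighborSet_inter]
    · rintro hthick ⟨_, i, rfl⟩
      rw [hφ, hthick.neighborSet_inter_of_compl]

lemma connected [Nontrivial ι] (h : IsIndexedSpider G s k R)
    (huniv : Set.range s ∪ Set.range k ∪ R = Set.univ) : G.Connected := by
  obtain ⟨i⟩ : Nonempty ι := inferInstance
  have hbody : ∀ j, G.Reachable (k i) (k j) := fun j => by
    rcases eq_or_ne i j with rfl | hij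
    · rfl
    · exact (h.body i j hij).reachable
  have hleg : ∀ j, ∃ l, G.Adj (s j) (k l) := fun j => by
    rcases h.legs with hthin | hthick
    · exact ⟨j, hthin.1 j⟩
    · obtain ⟨l, hl⟩ := exists_ne j
      exact ⟨l, compl_compl G ▸ hthick.2 j l hl.symm⟩
  refine (connected_iff_exists_forall_reachable G).2 ⟨k i, fun x => ?_⟩
  rcases huniv ▸ Set.mem_univ x with (⟨j, rfl⟩ | ⟨j, rfl⟩) | hx
  · obtain ⟨l, hl⟩ := hleg j
    exact (hbody l).trans hl.symm.reachable
  · exact hbody j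
  · exact (h.head_body x hx i).symm.reachable

lemma isP4_or_isP4 (h : IsIndexedSpider G s k R) {i j : ι} (hij : i ≠ j) :
    IsP4 G (s i) (k i) (k j) (s j) ∨ IsP4 G (s i) (k j) (k i) (s j) := by
  have hfeet : ¬G.Adj (s i) (s j) := (h.feet i j hij).2
  refine h.legs.imp (fun hthin => ?_) fun hthick => ?_
  · exact .of_adj (hthin.1 i) (h.body i j hij) (hthin.1 j).symm (hthin.2 i j hij).2 hfeet
      (mt .symm (hthin.2 j i hij.symm).2)
  · have hadj : ∀ l m, l ≠ m → G.Adj (s l) (k m) := by simpa only [compl_compl] using hthick.2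
    exact .of_adj (hadj i j hij) (h.body j i hij.symm) (hadj j i hij.symm).symm (hthick.1 i).2
      hfeet (mt .symm (hthick.1 j).2)

lemma adj_legs (h : IsIndexedSpider G s k R) (hG : P4Sparse G) {x : V}
    (hx : x ∉ Set.range s ∪ Set.range k) {i j : ι} (hij : i ≠ j) :
    (G.Adj x (s i) ↔ G.Adj x (s j)) ∧ (G.Adj x (k i) ↔ G.Adj x (k j)) ∧
      (G.Adj x (s i) → G.Adj x (k i)) := by
  have hs : ∀ l, x ≠ s l := fun l e => hx (.inl ⟨l, e.symm⟩)
  have hk : ∀ l, x ≠ k l := fun l e => hx (.inr ⟨l, e.symm⟩)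
  rcases h.isP4_or_isP4 hij with hP | hP
  · have hxP : x ∉ ({s i, k i, k j, s j} : Set V) := by simp [hs, hk]
    exact ⟨hG.adj_end_iff hP hxP, hG.adj_inner_iff hP hxP, hG.adj_inner_of_adj_end hP hxP⟩
  · have hxP : x ∉ ({s i, k j, k i, s j} : Set V) := by simp [hs, hk]
    have hbody : G.Adj x (k j) ↔ G.Adj x (k i) := hG.adj_inner_iff hP hxP
    exact ⟨hG.adj_end_iff hP hxP, hbody.symm,
      fun hxs => hbody.1 (hG.adj_inner_of_adj_end hP hxP hxs)⟩

lemma adj_legs_trichotomy [Nontrivial ι] (h : IsIndexedSpider G s k R) (hG : P4Sparse G) {x : V}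
    (hx : x ∉ Set.range s ∪ Set.range k) :
    x ∈ completeTo G (Set.range s ∪ Set.range k) ∨
      x ∈ completeTo Gᶜ (Set.range s ∪ Set.range k) ∨
      x ∈ completeTo Gᶜ (Set.range s) ∧ x ∈ completeTo G (Set.range k) := by
  obtain ⟨i, j, hij⟩ := exists_pair_ne ι
  have hfeet : ∀ l, G.Adj x (s i) ↔ G.Adj x (s l) := fun l => by
    rcases eq_or_ne i l with rfl | hil
    exacts [Iff.rfl, (h.adj_legs hG hx hil).1]
  have hbody : ∀ l, G.Adj x (k i) ↔ G.Adj x (k l) := fun l => by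
    rcases eq_or_ne i l with rfl | hil
    exacts [Iff.rfl, (h.adj_legs hG hx hil).2.1]
  by_cases hxs : G.Adj x (s i)
  · have hxk : G.Adj x (k i) := (h.adj_legs hG hx hij).2.2 hxs
    left
    rintro _ (⟨l, rfl⟩ | ⟨l, rfl⟩)
    exacts [(hfeet l).1 hxs, (hbody l).1 hxk]
  · have hfar : x ∈ completeTo Gᶜ (Set.range s) := by
      rintro _ ⟨l, rfl⟩
      exact ⟨fun hxl => hx (.inl ⟨l, hxl.symm⟩), mt (hfeet l).2 hxs⟩
    right
    by_cases hxk : G.Adj x (k i)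
    · exact .inr ⟨hfar, by rintro _ ⟨l, rfl⟩; exact (hbody l).1 hxk⟩
    · left
      rintro _ (hv | ⟨l, rfl⟩)
      exacts [hfar _ hv, ⟨fun hxl => hx (.inr ⟨l, hxl.symm⟩), mt (hbody l).2 hxk⟩]

end IsIndexedSpider

lemma IsSpiderPartition.exists_isIndexedSpider {G : SimpleGraph V} {S K R : Set V}
    (h : IsSpiderPartition G S K R) :
    ∃ k : S → V, Set.range k = K ∧ IsIndexedSpider G Subtype.val k R := by
  obtain ⟨-, hSK, hSR, -, -, -, hS, hK, hRK, hRS, φ, hφ⟩ := h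
  have hne : ∀ i j : S, (i : V) ≠ φ j := fun i j => hSK.ne_of_mem i.2 (φ j).2
  have hφne : ∀ i j : S, i ≠ j → (φ j : V) ≠ φ i := fun i j hij =>
    Subtype.coe_injective.ne (φ.injective.ne hij.symm)
  have hadj : ∀ i j : S, G.Adj (i : V) (φ j) ↔ (φ j : V) ∈ G.neighborSet (i : V) ∩ K :=
    fun i j => by simp only [Set.mem_inter_iff, mem_neighborSet, (φ j).2, and_true]
  refine ⟨fun i => φ i, ?_, ?_, ?_, ?_, ?_, ?_⟩
  · rw [← Function.comp_def, φ.surjective.range_comp, Subtype.range_coe]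
  · exact fun i j hij => ⟨Subtype.coe_injective.ne hij,
      hS i i.2 j j.2 (Subtype.coe_injective.ne hij)⟩
  · exact fun i j hij => hK _ (φ i).2 _ (φ j).2 (hφne j i hij.symm)
  · exact fun r hr i => ⟨(hSR.ne_of_mem i.2 hr).symm, hRS r hr i i.2⟩
  · exact fun r hr i => hRK r hr _ (φ i).2
  · refine hφ.imp (fun hthin => ⟨fun i => ?_, fun i j hij => ⟨hne i j, ?_⟩⟩)
      fun hthick => ⟨fun i => ⟨hne i i, ?_⟩, fun i j hij => ?_⟩
    · rw [hadj, hthin]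
      rfl
    · rw [hadj, hthin]
      exact hφne i j hij
    · rw [hadj, hthick]
      exact fun hmem => hmem.2 rfl
    · rw [compl_compl, hadj, hthick]
      exact ⟨(φ j).2, hφne i j hij⟩

lemma IsSpider.connected_and_connected_compl {G : SimpleGraph V} (h : IsSpider G) :
    G.Connected ∧ Gᶜ.Connected := by
  obtain ⟨S, K, R, hP⟩ := h
  obtain ⟨k, rfl, hspider⟩ := hP.exists_isIndexedSpider
  obtain ⟨huniv, -, -, -, hcard, hcard', -⟩ := hP
  have : Nontrivial S := Set.nontrivial_coe_sort.2
    (Set.one_lt_ncard_iff_nontrivial_and_finite.1 (hcard ▸ hcard')).1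
  exact ⟨hspider.connected (by rwa [Subtype.range_coe]),
    hspider.compl.connected (by rwa [Subtype.range_coe, Set.union_comm (Set.range k)])⟩

namespace IsIndexedSpider

variable {ι : Type*} {G : SimpleGraph V} {s k : ι → V} {R : Set V} {x m : V}

lemma exists_thick (h : IsIndexedSpider G s k R) [Nontrivial ι] (hG : P4Sparse G)
    (hx : x ∈ completeTo G (Set.range s ∪ Set.range k)) (hm : m ∈ R) (hxm : ¬G.Adj x m) :
    ∃ k' : ι → V, Set.range k' = Set.range k ∧ IsIndexedSpider G s k' R ∧
      IsLegMatching Gᶜ s k' := by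
  classical
  rcases h.legs with hthin | hthick
  swap
  · exact ⟨k, rfl, h, hthick⟩
  obtain ⟨i, j, hij⟩ := exists_pair_ne ι
  have hxs : ∀ l, G.Adj x (s l) := fun l => hx _ (.inl ⟨l, rfl⟩)
  have hxk : ∀ l, G.Adj x (k l) := fun l => hx _ (.inr ⟨l, rfl⟩)
  have hP : IsP4 G m (k i) x (s j) :=
    .of_adj (h.head_body m hm i) (hxk i).symm (hxs j) (mt .symm hxm) (h.head_feet m hm j).2
      (mt .symm (hthin.2 j i hij.symm).2)
  -- A third foot would be adjacent to `x` but not to the other inner vertex of this path.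
  have htwo : ∀ l, l = i ∨ l = j := fun l => by
    by_contra! hl
    have hlP : s l ∉ ({m, k i, x, s j} : Set V) := by
      simp [(h.head_feet m hm l).ne', h.feet_ne_body l i, (hxs l).ne', (h.feet l j hl.2).ne]
    exact (hthin.2 l i hl.1).2 ((hG.adj_inner_iff hP hlP).2 (hxs l).symm)
  have hrange : Set.range (k ∘ Equiv.swap i j) = Set.range k :=
    (Equiv.swap i j).surjective.range_comp k
  have hthick := hthin.comp_swap hij htwo
  exact ⟨k ∘ Equiv.swap i j, hrange, ⟨h.feet,
    fun a b hab => h.body _ _ ((Equiv.swap i j).injective.ne hab), h.head_feet,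
    fun r hr l => h.head_body r hr _, .inr hthick⟩, hthick⟩

lemma insert_leg [Nonempty ι] (h : IsIndexedSpider G s k R) (hG : P4Sparse G)
    (hthick : IsLegMatching Gᶜ s k) (hx : x ∈ completeTo G (Set.range s ∪ Set.range k))
    (hm : m ∈ R) (hxm : ¬G.Adj x m) :
    IsIndexedSpider G (fun o : Option ι => o.elim m s) (fun o => o.elim x k) (R \ {m}) := by
  obtain ⟨i⟩ := ‹Nonempty ι›
  have hxs : ∀ l, G.Adj x (s l) := fun l => hx _ (.inl ⟨l, rfl⟩)
  have hxk : ∀ l, G.Adj x (k l) := fun l => hx _ (.inr ⟨l, rfl⟩)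
  have hxR : x ∉ R := fun hxR => (h.head_feet x hxR i).2 (hxs i)
  have hP : IsP4 G (s i) x (k i) m :=
    .of_adj (hxs i).symm (hxk i) (h.head_body m hm i).symm (hthick.1 i).2
      (mt .symm (h.head_feet m hm i).2) hxm
  have hhead : ∀ r ∈ R \ {m}, G.Adj r x ∧ Gᶜ.Adj r m := fun r ⟨hr, hrm⟩ => by
    have hrP : r ∉ ({s i, x, k i, m} : Set V) := by
      have hrx : r ≠ x := fun hrx => hxR (hrx ▸ hr)
      simpa [(h.head_feet r hr i).ne, (h.head_body r hr i).ne, hrx] using hrm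
    exact ⟨(hG.adj_inner_iff hP hrP).2 (h.head_body r hr i),
      hrm, mt (hG.adj_end_iff hP hrP).2 (h.head_feet r hr i).2⟩
  have hmx : Gᶜ.Adj m x := ⟨fun hmx => hxR (hmx ▸ hm), mt .symm hxm⟩
  exact {
    feet := pairwise_adj_option_elim h.feet (h.head_feet m hm)
    body := pairwise_adj_option_elim h.body hxk
    head_feet := by
      rintro r hr (_ | l)
      exacts [(hhead r hr).2, h.head_feet r hr.1 l]
    head_body := by
      rintro r hr (_ | l)
      exacts [(hhead r hr).1, h.head_body r hr.1 l]
    legs := .inr (hthick.option_elim hmx (by simpa only [compl_compl] using h.head_body m hm)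
      (by simpa only [compl_compl] using hxs)) }

end IsIndexedSpider

/-- The vertex set `H` induces a spider in `G`. Its finitely many legs can be indexed by a type in
the lowest universe whatever the universe of `V`. -/
def InducesSpider (G : SimpleGraph V) (H : Set V) : Prop :=
  ∃ (ι : Type) (_ : Finite ι) (_ : Nontrivial ι) (s k : ι → V) (R : Set V),
    IsIndexedSpider G s k R ∧ Set.range s ∪ Set.range k ∪ R = H

section InducesSpider

variable {G : SimpleGraph V} {H R : Set V} {x : V}

lemma IsIndexedSpider.inducesSpider {ι : Type} [Finite ι] [Nontrivial ι] {s k : ι → V}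
    (h : IsIndexedSpider G s k R) : InducesSpider G (Set.range s ∪ Set.range k ∪ R) :=
  ⟨ι, ‹_›, ‹_›, s, k, R, h, rfl⟩

lemma IsP4.inducesSpider {a b c d : V} (hP : IsP4 G a b c d) (ha : a ∈ completeTo Gᶜ R)
    (hb : b ∈ completeTo G R) (hc : c ∈ completeTo G R) (hd : d ∈ completeTo Gᶜ R) :
    InducesSpider G ({a, d} ∪ {b, c} ∪ R) := by
  obtain ⟨-, hac, had, -, hbd, -, hab, hbc, hcd, hac', had', hbd'⟩ := hP
  have h : IsIndexedSpider G ![a, d] ![b, c] R := {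
    feet := by simp [Fin.forall_fin_two, had, had', had.symm, G.adj_comm d a]
    body := by simp [Fin.forall_fin_two, hbc, hbc.symm]
    head_feet := fun r hr => by
      simpa only [Fin.forall_fin_two] using ⟨(ha r hr).symm, (hd r hr).symm⟩
    head_body := fun r hr => by
      simpa only [Fin.forall_fin_two] using ⟨(hb r hr).symm, (hc r hr).symm⟩
    legs := .inl (by
      simp [IsLegMatching, Fin.forall_fin_two, hab, hcd.symm, hac, hac', hbd.symm, G.adj_comm d b,
        hbd']) }
  simpa [Set.pair_comm] using h.inducesSpider

namespace InducesSpider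

lemma compl (h : InducesSpider G H) : InducesSpider Gᶜ H := by
  obtain ⟨ι, _, _, s, k, R, hS, rfl⟩ := h
  rw [Set.union_comm (Set.range s)]
  exact hS.compl.inducesSpider

lemma nontrivial (h : InducesSpider G H) : H.Nontrivial := by
  obtain ⟨ι, _, _, s, k, R, hS, rfl⟩ := h
  obtain ⟨i⟩ : Nonempty ι := inferInstance
  exact ⟨s i, .inl (.inl ⟨i, rfl⟩), k i, .inl (.inr ⟨i, rfl⟩), hS.feet_ne_body i i⟩

lemma isSpider (h : InducesSpider G Set.univ) : IsSpider G := by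
  obtain ⟨ι, _, _, s, k, R, hS, huniv⟩ := h
  exact ⟨_, _, R, hS.isSpiderPartition huniv⟩

end InducesSpider

lemma IsIndexedSpider.complete_or_inducesSpider_insert {ι : Type} [Finite ι] [Nontrivial ι]
    {s k : ι → V} (h : IsIndexedSpider G s k R) (hG : P4Sparse G)
    (hx : x ∈ completeTo G (Set.range s ∪ Set.range k)) :
    x ∈ completeTo G (Set.range s ∪ Set.range k ∪ R) ∨
      InducesSpider G (insert x (Set.range s ∪ Set.range k ∪ R)) := by
  refine or_iff_not_imp_left.2 fun hxR => ?_
  obtain ⟨m, hm, hxm⟩ : ∃ m ∈ R, ¬G.Adj x m := by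
    by_contra! hall
    exact hxR fun v hv => hv.elim (hx v) (hall v)
  obtain ⟨k', hk', h', hthick⟩ := h.exists_thick hG hx hm hxm
  rw [← hk'] at hx ⊢
  have hset : insert x (Set.range s ∪ Set.range k' ∪ R) =
      insert m (Set.range s) ∪ insert x (Set.range k') ∪ R \ {m} := by grind
  have hspider := (h'.insert_leg hG hthick hx hm hxm).inducesSpider
  rwa [Option.range_elim, Option.range_elim, ← hset] at hspider

lemma InducesSpider.uniform_or_insert (h : InducesSpider G H) (hG : P4Sparse G) (hxH : x ∉ H) :
    (x ∈ completeTo G H ∨ x ∈ completeTo Gᶜ H) ∨ InducesSpider G (insert x H) := by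
  obtain ⟨ι, _, _, s, k, R, hS, rfl⟩ := h
  rcases hS.adj_legs_trichotomy hG fun hx => hxH (.inl hx) with hx | hx | ⟨hxs, hxk⟩
  · exact (hS.complete_or_inducesSpider_insert hG hx).imp_left .inl
  · rw [Set.union_comm (Set.range s)] at hx ⊢
    exact (hS.compl.complete_or_inducesSpider_insert hG.compl hx).imp .inr
      fun hspider => compl_compl G ▸ hspider.compl
  · have hinsert : IsIndexedSpider G s k (insert x R) := {
      hS with
      head_feet := by
        rintro r (rfl | hr) i
        exacts [hxs _ ⟨i, rfl⟩, hS.head_feet r hr i]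
      head_body := by
        rintro r (rfl | hr) i
        exacts [hxk _ ⟨i, rfl⟩, hS.head_body r hr i] }
    rw [← Set.union_insert]
    exact .inr hinsert.inducesSpider

lemma P4Sparse.inducesSpider_univ [Finite V] [Nontrivial V] (hG : P4Sparse G) (hc : G.Connected)
    (hcc : Gᶜ.Connected) : InducesSpider G Set.univ := by
  have hexists : {H | InducesSpider G H}.Nonempty := by
    obtain ⟨a, b, c, d, hP⟩ : ∃ a b c d, IsP4 G a b c d := by
      by_contra! hcograph
      exact IsCograph.not_connected_compl hcograph hc hcc
    exact ⟨_, hP.inducesSpider (R := ∅) (by simp [completeTo]) (by simp [completeTo])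
      (by simp [completeTo]) (by simp [completeTo])⟩
  obtain ⟨H, hH, hmax⟩ := (Set.toFinite {H | InducesSpider G H}).exists_maximal hexists
  have hhom : IsHomogeneous G H := fun x hx => (hH.uniform_or_insert hG hx).resolve_right
    fun hinsert => hx (hmax hinsert (Set.subset_insert x H) (Set.mem_insert x H))
  by_contra hspider
  have huniv : H ≠ Set.univ := fun huniv => hspider (huniv ▸ hH)
  obtain ⟨a, ha, b, hb, c, hc', d, hd, hP⟩ := (hhom.noP4MeetsOnce hG hH.nontrivial).exists_isP4
    hhom hH.nontrivial.nonempty huniv hc hcc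
  have haH : a ∈ H := hmax (hP.inducesSpider ha hb hc' hd) Set.subset_union_right (by simp)
  exact notMem_of_mem_completeTo ha haH

end InducesSpider

/-- Let `G` be a `P4`-sparse graph with at least 2 vertices. Then exactly one
of the following holds: `G` is not connected; the complement of `G` is not connected;
`G` is a spider. -/
theorem p4Sparse_trichotomy [Fintype V] (G : SimpleGraph V)
    (hcard : 2 ≤ Fintype.card V) (hG : P4Sparse G) :
    (¬G.Connected ∧ Gᶜ.Connected ∧ ¬IsSpider G) ∨
    (G.Connected ∧ ¬Gᶜ.Connected ∧ ¬IsSpider G) ∨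
    (G.Connected ∧ Gᶜ.Connected ∧ IsSpider G) := by
  have : Nontrivial V := Fintype.one_lt_card_iff_nontrivial.1 hcard
  have hspider : IsSpider G ↔ G.Connected ∧ Gᶜ.Connected :=
    ⟨IsSpider.connected_and_connected_compl,
      fun ⟨hc, hcc⟩ => (hG.inducesSpider_univ hc hcc).isSpider⟩
  have hor : G.Connected ∨ Gᶜ.Connected := connected_or_connected_compl G
  tauto
end

section
/- Let G be a P4-sparse graph whose complement is not connected, and let C_1, ..., C_p be the vertex sets of the connected components of the complement of G. Then alpha(G) = sum over i of alpha(G[C_i]). -/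
open SimpleGraph

variable {V : Type*}

/-!
If `V` is partitioned so that any two vertices in different parts are adjacent, then `G` is the
join of the graphs induced on the parts. Deleting edges inside the parts keeps it a join, and a
join of cographs is a cograph because the complement of a `P4` is connected; so deletion sets of
the parts unite to one of `G`. Conversely a deletion set of `G` restricts to one of every part,
and the restrictions are disjoint. The connected components of `Gᶜ` form such a partition.
-/

section P4

variable {W : Type*} {G : SimpleGraph V} {a b c d : V}

/- Two of the four vertices are always told apart by their adjacency to a third one, so that
distinctness comes for free. -/
theorem isP4_iff_adj :
    IsP4 G a b c d ↔
      G.Adj a b ∧ G.Adj b c ∧ G.Adj c d ∧ ¬G.Adj a c ∧ ¬G.Adj a d ∧ ¬G.Adj b d := by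
  refine ⟨fun ⟨_, _, _, _, _, _, h⟩ => h, fun h => ?_⟩
  have ⟨hab, hbc, hcd, _, had, hbd⟩ := h
  have hne_ac : a ≠ c := fun heq => had (heq ▸ hcd)
  have hne_ad : a ≠ d := fun heq => hbd (heq ▸ hab.symm)
  have hne_bd : b ≠ d := fun heq => had (heq ▸ hab)
  exact ⟨hab.ne, hne_ac, hne_ad, hbc.ne, hne_bd, hcd.ne, h⟩

theorem isP4_comap_iff {f : W → V} {a b c d : W} :
    IsP4 (G.comap f) a b c d ↔ IsP4 G (f a) (f b) (f c) (f d) := by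
  simp only [isP4_iff_adj, comap_adj]

theorem IsCograph.comap (hG : IsCograph G) (f : W → V) : IsCograph (G.comap f) :=
  fun _ _ _ _ h => hG _ _ _ _ (isP4_comap_iff.1 h)

theorem isCograph_bot : IsCograph (⊥ : SimpleGraph V) :=
  fun _ _ _ _ h => (isP4_iff_adj.1 h).1

/- The hypothesis `hf` says that `G` is the join of the graphs it induces on the fibres of `f`. -/
theorem isCograph_of_forall_induce_preimage {ι : Type*} {f : V → ι}
    (hf : (⊤ : SimpleGraph ι).comap f ≤ G) (h : ∀ i, IsCograph (G.induce (f ⁻¹' {i}))) :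
    IsCograph G := by
  intro a b c d hP
  have eq_of_not_adj {x y : V} (hxy : ¬G.Adj x y) : f x = f y := not_not.1 fun hne => hxy (hf hne)
  obtain ⟨-, -, -, hac, had, hbd⟩ := isP4_iff_adj.1 hP
  have hd : f d = f a := (eq_of_not_adj had).symm
  have hc : f c = f a := (eq_of_not_adj hac).symm
  have hb : f b = f a := (eq_of_not_adj hbd).trans hd
  exact h (f a) ⟨a, rfl⟩ ⟨b, hb⟩ ⟨c, hc⟩ ⟨d, hd⟩ (isP4_comap_iff.2 hP)

end P4

section UnorderedPairs

open scoped Function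

variable {ι : Type*} {s : ι → Set V}

theorem sym2_map_val_image_subset_sym2 {t : Set V} (F : Set (Sym2 t)) :
    Sym2.map Subtype.val '' F ⊆ t.sym2 := by
  rintro _ ⟨⟨x, y⟩, -, rfl⟩
  exact ⟨x.2, y.2⟩

theorem pairwise_disjoint_sym2_map_val_image (hs : Pairwise (Disjoint on s))
    (F : ∀ i, Set (Sym2 (s i))) :
    Pairwise (Disjoint on fun i => Sym2.map Subtype.val '' F i) := by
  intro i j hij
  have hsym2 : Disjoint (s i).sym2 (s j).sym2 := by
    rw [Set.disjoint_iff_inter_eq_empty, ← Set.sym2_inter, (hs hij).inter_eq, Set.sym2_empty]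
  exact hsym2.mono (sym2_map_val_image_subset_sym2 _) (sym2_map_val_image_subset_sym2 _)

theorem sym2_map_val_preimage_iUnion_image (hs : Pairwise (Disjoint on s))
    (F : ∀ i, Set (Sym2 (s i))) (i : ι) :
    Sym2.map Subtype.val ⁻¹' (⋃ j, Sym2.map Subtype.val '' F j) = F i := by
  refine subset_antisymm (fun e he => ?_) fun e he => Set.mem_iUnion_of_mem i ⟨e, he, rfl⟩
  obtain ⟨j, e', he', heq⟩ := Set.mem_iUnion.1 he
  obtain rfl : j = i := by
    obtain ⟨x, y⟩ := e
    obtain ⟨hx, -⟩ := heq ▸ sym2_map_val_image_subset_sym2 (F j) ⟨e', he', rfl⟩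
    by_contra hji
    exact Set.disjoint_left.1 (hs hji) hx x.2
  exact Sym2.map.injective Subtype.val_injective heq ▸ he'

end UnorderedPairs

section DeletionSets

variable {W ι : Type*} {G : SimpleGraph V} {F : Set (Sym2 V)}

theorem comap_deleteEdges (f : W → V) (F : Set (Sym2 V)) :
    (G.deleteEdges F).comap f = (G.comap f).deleteEdges (Sym2.map f ⁻¹' F) := by
  ext x y
  simp only [comap_adj, deleteEdges_adj, Set.mem_preimage, Sym2.map_mk]

theorem isDeletionSet_edgeSet (G : SimpleGraph V) : IsDeletionSet G G.edgeSet :=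
  ⟨subset_rfl, by simpa only [deleteEdges_edgeSet, sdiff_self] using isCograph_bot⟩

theorem IsDeletionSet.comap (hF : IsDeletionSet G F) (f : W → V) :
    IsDeletionSet (G.comap f) (Sym2.map f ⁻¹' F) := by
  refine ⟨?_, comap_deleteEdges f F ▸ hF.2.comap f⟩
  rintro ⟨x, y⟩ he
  exact hF.1 he

theorem isDeletionSet_iUnion_of_comap_top_le {f : V → ι} (hf : (⊤ : SimpleGraph ι).comap f ≤ G)
    {F : ∀ i, Set (Sym2 (f ⁻¹' {i}))}
    (hF : ∀ i, IsDeletionSet (G.induce (f ⁻¹' {i})) (F i)) :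
    IsDeletionSet G (⋃ i, Sym2.map Subtype.val '' F i) := by
  refine ⟨Set.iUnion_subset fun i => ?_,
    isCograph_of_forall_induce_preimage (f := f) ?_ fun i => ?_⟩
  · rintro _ ⟨⟨x, y⟩, he, rfl⟩
    exact (hF i).1 he
  · refine fun x y hxy => deleteEdges_adj.2 ⟨hf hxy, fun he => ?_⟩
    obtain ⟨i, hi⟩ := Set.mem_iUnion.1 he
    obtain ⟨hx, hy⟩ := sym2_map_val_image_subset_sym2 (F i) hi
    exact hxy (hx.trans hy.symm)
  · have hinduce := comap_deleteEdges (G := G) (Subtype.val : f ⁻¹' {i} → V)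
      (⋃ j, Sym2.map Subtype.val '' F j)
    rw [sym2_map_val_preimage_iUnion_image (pairwise_disjoint_fiber f)] at hinduce
    exact (congrArg IsCograph hinduce).mpr (hF i).2

end DeletionSets

section Alpha

open scoped Function

variable {ι : Type*} {G : SimpleGraph V}

theorem exists_isDeletionSet_ncard_eq (G : SimpleGraph V) :
    ∃ F : Set (Sym2 V), IsDeletionSet G F ∧ F.ncard = cographAlpha G :=
  Nat.sInf_mem (s := {n | ∃ F : Set (Sym2 V), IsDeletionSet G F ∧ F.ncard = n})
    ⟨_, G.edgeSet, isDeletionSet_edgeSet G, rfl⟩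

theorem IsDeletionSet.cographAlpha_le {F : Set (Sym2 V)} (hF : IsDeletionSet G F) :
    cographAlpha G ≤ F.ncard :=
  Nat.sInf_le ⟨F, hF, rfl⟩

theorem sum_cographAlpha_induce_le [Finite V] [Fintype ι] (G : SimpleGraph V) {s : ι → Set V}
    (hs : Pairwise (Disjoint on s)) :
    ∑ i, cographAlpha (G.induce (s i)) ≤ cographAlpha G := by
  obtain ⟨F, hF, hcard⟩ := exists_isDeletionSet_ncard_eq G
  let E (i : ι) : Set (Sym2 (s i)) := Sym2.map Subtype.val ⁻¹' F
  have hncard (i : ι) : (E i).ncard = (Sym2.map Subtype.val '' E i).ncard :=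
    (Set.ncard_image_of_injective _ (Sym2.map.injective Subtype.val_injective)).symm
  calc ∑ i, cographAlpha (G.induce (s i))
      ≤ ∑ i, (E i).ncard := Finset.sum_le_sum fun i _ => (hF.comap _).cographAlpha_le
    _ = ∑ i, (Sym2.map Subtype.val '' E i).ncard := Finset.sum_congr rfl fun i _ => hncard i
    _ = (⋃ i, Sym2.map Subtype.val '' E i).ncard := by
        rw [Set.ncard_iUnion_of_finite (fun i => Set.toFinite _)
          (pairwise_disjoint_sym2_map_val_image hs E), finsum_eq_sum_of_fintype]
    _ ≤ F.ncard := Set.ncard_le_ncard (Set.iUnion_subset fun i => Set.image_preimage_subset _ F)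
    _ = cographAlpha G := hcard

theorem cographAlpha_le_sum_of_comap_top_le [Fintype ι] {f : V → ι}
    (hf : (⊤ : SimpleGraph ι).comap f ≤ G) :
    cographAlpha G ≤ ∑ i, cographAlpha (G.induce (f ⁻¹' {i})) := by
  choose F hF hcard using fun i => exists_isDeletionSet_ncard_eq (G.induce (f ⁻¹' {i}))
  calc cographAlpha G
      ≤ (⋃ i, Sym2.map Subtype.val '' F i).ncard :=
        (isDeletionSet_iUnion_of_comap_top_le hf hF).cographAlpha_le
    _ ≤ ∑ i, (Sym2.map Subtype.val '' F i).ncard := Set.ncard_iUnion_le_of_fintype _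
    _ = ∑ i, cographAlpha (G.induce (f ⁻¹' {i})) := Finset.sum_congr rfl fun i _ => by
        rw [Set.ncard_image_of_injective _ (Sym2.map.injective Subtype.val_injective), hcard]

theorem cographAlpha_eq_sum_of_comap_top_le [Finite V] [Fintype ι] {f : V → ι}
    (hf : (⊤ : SimpleGraph ι).comap f ≤ G) :
    cographAlpha G = ∑ i, cographAlpha (G.induce (f ⁻¹' {i})) :=
  (cographAlpha_le_sum_of_comap_top_le hf).antisymm
    (sum_cographAlpha_induce_le G (pairwise_disjoint_fiber f))

end Alpha

theorem comap_connectedComponentMk_compl_top_le (G : SimpleGraph V) :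
    (⊤ : SimpleGraph Gᶜ.ConnectedComponent).comap Gᶜ.connectedComponentMk ≤ G := by
  intro x y hxy
  have hne : x ≠ y := fun h => hxy (congrArg _ h)
  by_contra hadj
  exact hxy (ConnectedComponent.connectedComponentMk_eq_of_adj ((compl_adj G x y).2 ⟨hne, hadj⟩))

theorem cographAlpha_of_compl_not_connected_general [Finite V] (G : SimpleGraph V) :
    cographAlpha G = ∑ᶠ c : Gᶜ.ConnectedComponent, cographAlpha (G.induce c.supp) := by
  have := Fintype.ofFinite Gᶜ.ConnectedComponent
  rw [finsum_eq_sum_of_fintype]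
  exact cographAlpha_eq_sum_of_comap_top_le (comap_connectedComponentMk_compl_top_le G)

/-- If `G` is `P4`-sparse and its complement is not connected, and
`C₁, …, C_p` are the vertex sets of the connected components of the complement of `G`,
then `α(G) = ∑ᵢ α(G[Cᵢ])`. -/
theorem cographAlpha_of_compl_not_connected [Fintype V] (G : SimpleGraph V)
    (hG : P4Sparse G) (h : ¬Gᶜ.Connected) :
    cographAlpha G = ∑ᶠ c : Gᶜ.ConnectedComponent, cographAlpha (G.induce c.supp) :=
  cographAlpha_of_compl_not_connected_general G
end

section
/- Let G be a P4-sparse graph and let A = {a, b, c, d} be a set of four vertices inducing a P4 in G with edges ab, bc, cd (so b and c are the internal vertices). Then every vertex v not in A with 1 <= |N(v) ∩ A| <= 3 satisfies N(v) ∩ A = {b, c}. In other words, P(A) = Pmid(A), where Pmid(A) is the set of vertices outside A adjacent to exactly the two internal vertices of the path. -/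
open SimpleGraph

variable {V : Type*}

/-!
Suppose `v ∉ A = {a, b, c, d}`. Sparseness forbids every `P4` through `v` inside `A ∪ {v}`. The
paths `vabc`, `avcd` and `bavd` give `v ~ a → v ~ b`, the path `vbcd` then gives `v ~ b → v ~ c`,
and `avcd` alone gives `v ~ a → v ~ c → v ~ d`; the mirror images hold by reversing the `P4`.
So any neighbour of `v` in `A` forces both internal vertices, and an end vertex forces all of `A`.
-/

namespace IsP4

variable {G : SimpleGraph V} {a b c d : V}

theorem of_adj_s7 (hab : G.Adj a b) (hbc : G.Adj b c) (hcd : G.Adj c d)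
    (hac : ¬G.Adj a c) (had : ¬G.Adj a d) (hbd : ¬G.Adj b d) : IsP4 G a b c d := by
  have hne_ac : a ≠ c := by rintro rfl; exact had hcd
  have hne_ad : a ≠ d := by rintro rfl; exact hbd hab.symm
  have hne_bd : b ≠ d := by rintro rfl; exact had hab
  exact ⟨hab.ne, hne_ac, hne_ad, hbc.ne, hne_bd, hcd.ne, hab, hbc, hcd, hac, had, hbd⟩

theorem reverse (h : IsP4 G a b c d) : IsP4 G d c b a := by
  obtain ⟨-, -, -, -, -, -, hab, hbc, hcd, hac, had, hbd⟩ := h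
  exact of_adj_s7 hcd.symm hbc.symm hab.symm (mt Adj.symm hbd) (mt Adj.symm had) (mt Adj.symm hac)

end IsP4

theorem InducesP4.ncard_eq_four {G : SimpleGraph V} {A : Set V} (hA : InducesP4 G A) :
    A.ncard = 4 := by
  obtain ⟨a, b, c, d, ⟨hab, hac, had, hbc, hbd, hcd, -⟩, rfl⟩ := hA
  rw [Set.ncard_insert_of_notMem (by simp [hab, hac, had]),
    Set.ncard_eq_three.2 ⟨b, c, d, hbc, hbd, hcd, rfl⟩]

namespace P4Sparse

variable {G : SimpleGraph V}

theorem eq_of_subset_insert (hG : P4Sparse G) {A B : Set V} {v : V} (hA : InducesP4 G A)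
    (hB : InducesP4 G B) (hv : v ∉ A) (hBA : B ⊆ insert v A) : B = A := by
  have hfin : A.Finite := Set.finite_of_ncard_ne_zero (by simp [hA.ncard_eq_four])
  have hcard : (insert v A).ncard = 5 := by
    rw [Set.ncard_insert_of_notMem hv hfin, hA.ncard_eq_four]
  exact hG _ hcard B A hBA (Set.subset_insert v A) hB hA

variable {a b c d v : V}

theorem not_isP4_of_subset_insert (hG : P4Sparse G) (hP : IsP4 G a b c d)
    (hv : v ∉ ({a, b, c, d} : Set V)) {w x y z : V} (hmem : v ∈ ({w, x, y, z} : Set V))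
    (hsub : ({w, x, y, z} : Set V) ⊆ {v, a, b, c, d}) : ¬IsP4 G w x y z := by
  intro hQ
  have heq := hG.eq_of_subset_insert ⟨a, b, c, d, hP, rfl⟩ ⟨w, x, y, z, hQ, rfl⟩ hv hsub
  exact hv (heq ▸ hmem)

theorem adj_fourth_of_adj_first_of_adj_third (hG : P4Sparse G) (hP : IsP4 G a b c d)
    (hv : v ∉ ({a, b, c, d} : Set V)) (hva : G.Adj v a) (hvc : G.Adj v c) : G.Adj v d := by
  have ⟨_, _, _, _, _, _, _, _, hcd, hac, had, _⟩ := hP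
  by_contra hvd
  have havcd : IsP4 G a v c d := .of_adj hva.symm hvc hcd hac had hvd
  exact hG.not_isP4_of_subset_insert hP hv (by simp) (by grind) havcd

theorem adj_second_of_adj_first (hG : P4Sparse G) (hP : IsP4 G a b c d)
    (hv : v ∉ ({a, b, c, d} : Set V)) (hva : G.Adj v a) : G.Adj v b := by
  have ⟨_, _, _, _, _, _, hab, hbc, _, hac, had, hbd⟩ := hP
  by_contra hvb
  have hvc : G.Adj v c := by
    by_contra hvc
    have hvabc : IsP4 G v a b c := .of_adj hva hab hbc hvb hvc hac
    exact hG.not_isP4_of_subset_insert hP hv (by simp) (by grind) hvabc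
  have hvd : G.Adj v d := hG.adj_fourth_of_adj_first_of_adj_third hP hv hva hvc
  have hbavd : IsP4 G b a v d := .of_adj hab.symm hva.symm hvd (mt Adj.symm hvb) hbd had
  exact hG.not_isP4_of_subset_insert hP hv (by simp) (by grind) hbavd

theorem adj_third_of_adj_second (hG : P4Sparse G) (hP : IsP4 G a b c d)
    (hv : v ∉ ({a, b, c, d} : Set V)) (hvb : G.Adj v b) : G.Adj v c := by
  have ⟨_, _, _, _, _, _, _, hbc, hcd, _, _, hbd⟩ := hP
  by_contra hvc
  have hvd : ¬G.Adj v d := mt (hG.adj_second_of_adj_first hP.reverse (by grind)) hvc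
  have hvbcd : IsP4 G v b c d := .of_adj hvb hbc hcd hvc hvd hbd
  exact hG.not_isP4_of_subset_insert hP hv (by simp) (by grind) hvbcd

theorem adj_second_iff_adj_third (hG : P4Sparse G) (hP : IsP4 G a b c d)
    (hv : v ∉ ({a, b, c, d} : Set V)) : G.Adj v b ↔ G.Adj v c :=
  ⟨hG.adj_third_of_adj_second hP hv, hG.adj_third_of_adj_second hP.reverse (by grind)⟩

theorem adj_second_of_adj_mem (hG : P4Sparse G) (hP : IsP4 G a b c d)
    (hv : v ∉ ({a, b, c, d} : Set V)) {u : V} (hu : u ∈ ({a, b, c, d} : Set V))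
    (hvu : G.Adj v u) : G.Adj v b := by
  have hbc := hG.adj_second_iff_adj_third hP hv
  rcases hu with rfl | rfl | rfl | rfl
  · exact hG.adj_second_of_adj_first hP hv hvu
  · exact hvu
  · exact hbc.2 hvu
  · exact hbc.2 (hG.adj_second_of_adj_first hP.reverse (by grind) hvu)

theorem subset_neighborSet_of_adj_first (hG : P4Sparse G) (hP : IsP4 G a b c d)
    (hv : v ∉ ({a, b, c, d} : Set V)) (hva : G.Adj v a) : {a, b, c, d} ⊆ G.neighborSet v := by
  have hvb : G.Adj v b := hG.adj_second_of_adj_first hP hv hva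
  have hvc : G.Adj v c := hG.adj_third_of_adj_second hP hv hvb
  have hvd : G.Adj v d := hG.adj_fourth_of_adj_first_of_adj_third hP hv hva hvc
  rintro u (rfl | rfl | rfl | rfl) <;> assumption

end P4Sparse

/-- Let `G` be `P4`-sparse and let `A = {a, b, c, d}` induce a `P4` with
edges `ab, bc, cd` (so `b, c` are the internal vertices). Then every vertex `v ∉ A` with
`1 ≤ |N(v) ∩ A| ≤ 3` satisfies `N(v) ∩ A = {b, c}`. -/
theorem p4Sparse_partial_neighbors (G : SimpleGraph V) (hG : P4Sparse G)
    (a b c d : V) (hP4 : IsP4 G a b c d) (A : Set V) (hA : A = {a, b, c, d}) :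
    ∀ v : V, v ∉ A → 1 ≤ (G.neighborSet v ∩ A).ncard → (G.neighborSet v ∩ A).ncard ≤ 3 →
      G.neighborSet v ∩ A = {b, c} := by
  subst hA
  intro v hv hpos hle
  obtain ⟨u, hvu, hu⟩ := Set.nonempty_of_ncard_ne_zero (Nat.one_le_iff_ne_zero.1 hpos)
  have hvb : G.Adj v b := hG.adj_second_of_adj_mem hP4 hv hu hvu
  have hvc : G.Adj v c := (hG.adj_second_iff_adj_third hP4 hv).1 hvb
  have not_subset : ¬{a, b, c, d} ⊆ G.neighborSet v := by
    intro hsub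
    have hcard := InducesP4.ncard_eq_four ⟨a, b, c, d, hP4, rfl⟩
    rw [Set.inter_eq_right.2 hsub, hcard] at hle
    omega
  have hva : ¬G.Adj v a := mt (hG.subset_neighborSet_of_adj_first hP4 hv) not_subset
  have hvd : ¬G.Adj v d := fun hvd =>
    hva (hG.adj_fourth_of_adj_first_of_adj_third hP4.reverse (by grind) hvd hvb)
  ext w
  simp only [Set.mem_inter_iff, mem_neighborSet, Set.mem_insert_iff, Set.mem_singleton_iff]
  grind
end
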